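/- arXiv:1410.6271 — 2 statements merged into one kernel-verified Lean document; each statement's English description precedes it below -/
import Mathlib

section
/- Let d ≥ 1 and a, b : Fin d → ℝ with a i < b i for every i, and let D = {y ∈ EuclideanSpace ℝ (Fin d) : ∀ i, a i ≤ y i ≤ b i}. Then for every x ∈ D and every δ > 0, the Lebesgue measure of Metric.ball x δ ∩ D is at least ∏ i, min (δ / Real.sqrt d) (b i - a i). -/
open MeasureTheory

/-!
For `x ∈ [a, b] ⊆ ℝ`, the set `ball x r ∩ [a, b]` is, up to endpoints, an interval of length
`2 * r`, `x + r - a`, `b - x + r` or `b - a`, each of which is at least `min r (b - a)`.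
Boxes and sup-metric balls are products of intervals, so multiplying over the coordinates gives
the bound for sup-metric balls. The Euclidean ball of radius `δ` contains the sup-metric ball of
radius `δ / √d`.
-/

theorem preimage_ball_subset_ball_of_antilipschitzWith {α β : Type*} [PseudoMetricSpace α]
    [PseudoMetricSpace β] {K : NNReal} {f : α → β} (hf : AntilipschitzWith K f) (hK : 0 < K)
    (x : α) (r : ℝ) : f ⁻¹' Metric.ball (f x) r ⊆ Metric.ball x (K * r) := fun y hy ↦
  calc dist y x ≤ K * dist (f y) (f x) := hf.le_mul_dist y x
    _ < K * r := by gcongr; exact hy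

theorem preimage_ofLp_ball_div_sqrt_card_subset_ball {ι : Type*} [Fintype ι] [Nonempty ι]
    {β : ι → Type*} [∀ i, PseudoMetricSpace (β i)] (x : PiLp 2 β) (δ : ℝ) :
    WithLp.ofLp ⁻¹' Metric.ball x.ofLp (δ / √(Fintype.card ι)) ⊆ Metric.ball x δ := by
  have hanti : AntilipschitzWith (NNReal.sqrt (Fintype.card ι)) (@WithLp.ofLp 2 (∀ i, β i)) := by
    simpa [NNReal.sqrt_eq_rpow] using PiLp.antilipschitzWith_ofLp 2 β
  have hsqrt : 0 < NNReal.sqrt (Fintype.card ι) := NNReal.sqrt_pos.2 (by positivity)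
  have hscale : NNReal.sqrt (Fintype.card ι) * (δ / √(Fintype.card ι)) = δ := by
    rw [Real.coe_sqrt, NNReal.coe_natCast, mul_div_cancel₀ _ (by positivity)]
  simpa only [hscale] using
    preimage_ball_subset_ball_of_antilipschitzWith hanti hsqrt x (δ / √(Fintype.card ι))

theorem ofReal_min_le_volume_ball_inter_Icc {a b x r : ℝ} (hx : x ∈ Set.Icc a b) (hr : 0 ≤ r) :
    ENNReal.ofReal (min r (b - a)) ≤ volume (Metric.ball x r ∩ Set.Icc a b) := by
  obtain ⟨hax, hxb⟩ := hx
  have hlength : min r (b - a) ≤ min (x + r) b - max (x - r) a := by grind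
  calc ENNReal.ofReal (min r (b - a))
      ≤ ENNReal.ofReal (min (x + r) b - max (x - r) a) := ENNReal.ofReal_le_ofReal hlength
    _ = volume (Set.Ioo (x - r) (x + r) ∩ Set.Ioo a b) := by
        rw [Set.Ioo_inter_Ioo, Real.volume_Ioo]
    _ ≤ volume (Metric.ball x r ∩ Set.Icc a b) := by
        rw [Real.ball_eq_Ioo]
        gcongr
        exact Set.Ioo_subset_Icc_self

section Pi

variable {ι : Type*} [Fintype ι] {a b : ι → ℝ}

theorem ofReal_prod_min_le_volume_ball_inter_Icc {x : ι → ℝ} {r : ℝ}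
    (hx : x ∈ Set.Icc a b) (hr : 0 < r) :
    ENNReal.ofReal (∏ i, min r (b i - a i)) ≤ volume (Metric.ball x r ∩ Set.Icc a b) := by
  have hmin : ∀ i, 0 ≤ min r (b i - a i) := fun i ↦
    le_min hr.le (sub_nonneg.2 ((hx.1 i).trans (hx.2 i)))
  calc ENNReal.ofReal (∏ i, min r (b i - a i))
      = ∏ i, ENNReal.ofReal (min r (b i - a i)) :=
        ENNReal.ofReal_prod_of_nonneg fun i _ ↦ hmin i
    _ ≤ ∏ i, volume (Metric.ball (x i) r ∩ Set.Icc (a i) (b i)) :=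
        Finset.prod_le_prod' fun i _ ↦
          ofReal_min_le_volume_ball_inter_Icc ⟨hx.1 i, hx.2 i⟩ hr.le
    _ = volume (Metric.ball x r ∩ Set.Icc a b) := by
        rw [← volume_pi_pi, Set.pi_inter_distrib, ← ball_pi x hr, Set.pi_univ_Icc]

theorem ball_box_inter_volume_lower_bound_general [Nonempty ι] {x : EuclideanSpace ℝ ι}
    (hx : ∀ i, a i ≤ x i ∧ x i ≤ b i) {δ : ℝ} (hδ : 0 < δ) :
    ENNReal.ofReal (∏ i, min (δ / √(Fintype.card ι)) (b i - a i)) ≤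
      volume (Metric.ball x δ ∩ {y | ∀ i, a i ≤ y i ∧ y i ≤ b i}) := by
  have hr : 0 < δ / √(Fintype.card ι) := by positivity
  set r := δ / √(Fintype.card ι)
  calc ENNReal.ofReal (∏ i, min r (b i - a i))
      ≤ volume (Metric.ball x.ofLp r ∩ Set.Icc a b) :=
        ofReal_prod_min_le_volume_ball_inter_Icc (forall_and.1 hx) hr
    _ = volume (WithLp.ofLp ⁻¹' (Metric.ball x.ofLp r ∩ Set.Icc a b) :
          Set (EuclideanSpace ℝ ι)) :=
        ((PiLp.volume_preserving_ofLp ι).measure_preimage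
          (measurableSet_ball.inter measurableSet_Icc).nullMeasurableSet).symm
    _ ≤ volume (Metric.ball x δ ∩ {y | ∀ i, a i ≤ y i ∧ y i ≤ b i}) :=
        measure_mono fun _ ⟨hball, hbox⟩ ↦
          ⟨preimage_ofLp_ball_div_sqrt_card_subset_ball x δ hball, forall_and.2 hbox⟩

end Pi

theorem ball_box_inter_volume_lower_bound
    (d : ℕ) (hd : 1 ≤ d) (a b : Fin d → ℝ) (hab : ∀ i, a i < b i)
    (D : Set (EuclideanSpace ℝ (Fin d)))
    (hD : D = {y : EuclideanSpace ℝ (Fin d) | ∀ i, a i ≤ y i ∧ y i ≤ b i})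
    (x : EuclideanSpace ℝ (Fin d)) (hx : x ∈ D) (δ : ℝ) (hδ : 0 < δ) :
    ENNReal.ofReal (∏ i, min (δ / Real.sqrt d) (b i - a i)) ≤
      volume (Metric.ball x δ ∩ D) := by
  subst hD
  have : Nonempty (Fin d) := ⟨⟨0, hd⟩⟩
  simpa only [Fintype.card_fin] using ball_box_inter_volume_lower_bound_general hx hδ
end

section
/- Let (Ω, m, μ) be a probability space, ℱ a filtration indexed by ℕ with ℱ n ≤ m for all n, let d ≥ 1, and let Y : ℕ → Ω → EuclideanSpace ℝ (Fin d) be such that Y n is measurable with respect to ℱ n for every n. Fix x* ∈ EuclideanSpace ℝ (Fin d), and suppose that for every δ > 0 there exists ν > 0 such that for all n ≥ 1, ν ≤ μ[({ω | Y n ω ∈ Metric.ball x* δ}).indicator (fun _ => (1:ℝ)) | ℱ (n-1)] holds μ-almost everywhere. Then for μ-almost every ω, for every δ > 0 there are infinitely many n with Y n ω ∈ Metric.ball x* δ. -/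
open MeasureTheory Filter

/-!
Conditional probabilities bounded below by some `ν > 0` do not tend to `0`, so they are not
summable, and Lévy's conditional Borel–Cantelli lemma makes the corresponding events occur
infinitely often almost surely. Countably many balls form a neighbourhood basis of the point, so a
single null set serves all radii.
-/

open scoped Topology

section

variable {Ω : Type*} {m : MeasurableSpace Ω} {μ : Measure Ω}

section ConditionalBorelCantelli

variable [IsFiniteMeasure μ] {ℱ : Filtration ℕ m} {s : ℕ → Set Ω}

lemma ae_frequently_mem_of_not_tendsto_condExp_zero (hs : ∀ n, MeasurableSet[ℱ n] (s n)) :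
    ∀ᵐ ω ∂μ, ¬ Tendsto (fun k => (μ[(s (k + 1)).indicator (1 : Ω → ℝ) | ℱ k]) ω) atTop (𝓝 0) →
      ∃ᶠ n in atTop, ω ∈ s n := by
  have condExp_indicator_nonneg :
      ∀ᵐ ω ∂μ, ∀ k, 0 ≤ (μ[(s (k + 1)).indicator (1 : Ω → ℝ) | ℱ k]) ω :=
    ae_all_iff.2 fun k => condExp_nonneg <| .of_forall <|
      Set.indicator_nonneg fun _ _ => zero_le_one
  filter_upwards [ae_mem_limsup_atTop_iff μ hs, condExp_indicator_nonneg]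
    with ω mem_limsup_iff nonneg not_tendsto
  rw [← mem_limsup_iff_frequently_mem, mem_limsup_iff,
    ← not_summable_iff_tendsto_nat_atTop_of_nonneg nonneg]
  exact fun summable => not_tendsto summable.tendsto_atTop_zero

lemma ae_frequently_mem_of_le_condExp (hs : ∀ n, MeasurableSet[ℱ n] (s n)) {ν : ℝ} (hν : 0 < ν)
    (hle : ∀ k, ∀ᵐ ω ∂μ, ν ≤ (μ[(s (k + 1)).indicator (1 : Ω → ℝ) | ℱ k]) ω) :
    ∀ᵐ ω ∂μ, ∃ᶠ n in atTop, ω ∈ s n := by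
  filter_upwards [ae_frequently_mem_of_not_tendsto_condExp_zero hs, ae_all_iff.2 hle]
    with ω frequently_mem le_condExp
  exact frequently_mem fun tendsto_zero => hν.not_ge (ge_of_tendsto' tendsto_zero le_condExp)

end ConditionalBorelCantelli

lemma ae_forall_frequently_mem_of_hasBasis {α E : Type*} {ι : Sort*} {F : Filter α} {l : Filter E}
    [l.IsCountablyGenerated] {p : ι → Prop} {B : ι → Set E} (hl : l.HasBasis p B)
    {Y : α → Ω → E} (hY : ∀ i, p i → ∀ᵐ ω ∂μ, ∃ᶠ a in F, Y a ω ∈ B i) :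
    ∀ᵐ ω ∂μ, ∀ i, p i → ∃ᶠ a in F, Y a ω ∈ B i := by
  obtain ⟨x, hpx, hx⟩ := hl.exists_antitone_subbasis
  filter_upwards [ae_all_iff.2 fun k => hY (x k) (hpx k)] with ω hω i hi
  obtain ⟨k, hk⟩ := hx.mem_iff.1 (hl.mem_of_mem hi)
  exact (hω k).mono fun _ h => hk h

end

theorem ae_visits_every_ball_infinitely_often_general
    {Ω E : Type*} {m : MeasurableSpace Ω} {μ : Measure Ω} [IsFiniteMeasure μ]
    [PseudoMetricSpace E] [MeasurableSpace E] [OpensMeasurableSpace E]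
    (ℱ : Filtration ℕ m) (Y : ℕ → Ω → E) (hYmeas : ∀ n, Measurable[ℱ n] (Y n)) (xstar : E)
    (hcond : ∀ δ > (0 : ℝ), ∃ ν > (0 : ℝ), ∀ n, 1 ≤ n →
      ∀ᵐ ω ∂μ, ν ≤
        (μ[({ω' | Y n ω' ∈ Metric.ball xstar δ}).indicator (fun _ => (1 : ℝ)) |
          ℱ (n - 1)]) ω) :
    ∀ᵐ ω ∂μ, ∀ δ > (0 : ℝ), ∀ N : ℕ, ∃ n ≥ N, Y n ω ∈ Metric.ball xstar δ := by
  simp only [← frequently_atTop]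
  refine ae_forall_frequently_mem_of_hasBasis Metric.nhds_basis_ball fun δ hδ => ?_
  obtain ⟨ν, hν, hle⟩ := hcond δ hδ
  exact ae_frequently_mem_of_le_condExp (fun n => hYmeas n measurableSet_ball) hν
    fun k => hle (k + 1) k.succ_pos

theorem ae_visits_every_ball_infinitely_often
    {Ω : Type*} {m : MeasurableSpace Ω} {μ : Measure Ω} [IsProbabilityMeasure μ]
    (ℱ : Filtration ℕ m)
    (d : ℕ) (hd : 1 ≤ d)
    (Y : ℕ → Ω → EuclideanSpace ℝ (Fin d))
    (hYmeas : ∀ n, Measurable[ℱ n] (Y n))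
    (xstar : EuclideanSpace ℝ (Fin d))
    (hcond : ∀ δ > (0 : ℝ), ∃ ν > (0 : ℝ), ∀ n, 1 ≤ n →
      ∀ᵐ ω ∂μ, ν ≤
        (μ[({ω' | Y n ω' ∈ Metric.ball xstar δ}).indicator (fun _ => (1 : ℝ)) |
          ℱ (n - 1)]) ω) :
    ∀ᵐ ω ∂μ, ∀ δ > (0 : ℝ), ∀ N : ℕ, ∃ n ≥ N, Y n ω ∈ Metric.ball xstar δ :=
  ae_visits_every_ball_infinitely_often_general ℱ Y hYmeas xstar hcond
end
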